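/- arXiv:math/0504245 — 2 statements merged into one kernel-verified Lean document; each statement's English description precedes it below -/
import Mathlib

section
/- Let f be a non-constant meromorphic function on ℂ of finite order, let c, h ∈ ℂ and let δ < 1. Then m(r, f(z+c)/f(z+h)) = o( T(r+|c−h|+|h|, f) / r^δ ) as r → ∞, for all r outside a possible exceptional set of finite logarithmic measure. -/
open MeasureTheory Filter Topology Metric

noncomputable section

/-- Positive part of the logarithm: `log⁺ x = max (log x) 0`. -/
def logPlus (x : ℝ) : ℝ := max (Real.log x) 0

/-- The point `r e^{iθ}` on the circle of radius `r`. -/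
def circ (r θ : ℝ) : ℂ := (r : ℂ) * Complex.exp (θ * Complex.I)

/-- Nevanlinna proximity function `m(r, f)`. -/
def nevm (f : ℂ → ℂ) (r : ℝ) : ℝ :=
  (2 * Real.pi)⁻¹ * ∫ θ in (0:ℝ)..(2 * Real.pi), logPlus ‖f (circ r θ)‖

/-- Order of the pole of `f` at `x` (`0` if `f` extends analytically over `x`);
determined through the punctured neighbourhood of `x`. -/
def poleOrd (f : ℂ → ℂ) (x : ℂ) : ℕ :=
  sInf {n : ℕ | ∃ g : ℂ → ℂ, AnalyticAt ℂ g x ∧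
    ∀ᶠ w in 𝓝[≠] x, (w - x) ^ n * f w = g w}

/-- Unintegrated counting function `n(r, f)`: number of poles of `f` in `|z| ≤ r`,
counted with multiplicity. -/
def nevn (f : ℂ → ℂ) (r : ℝ) : ℕ := ∑ᶠ z ∈ closedBall (0:ℂ) r, poleOrd f z

/-- Integrated counting function `N(r, f)`. -/
def nevN (f : ℂ → ℂ) (r : ℝ) : ℝ :=
  (∫ t in (0:ℝ)..r, ((nevn f t : ℝ) - (nevn f 0 : ℝ)) / t) + (nevn f 0 : ℝ) * Real.log r

/-- Nevanlinna characteristic `T(r, f) = m(r, f) + N(r, f)`. -/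
def nevT (f : ℂ → ℂ) (r : ℝ) : ℝ := nevm f r + nevN f r

/-- A subset of `(0, ∞)` has finite logarithmic measure: `∫_E dr/r < ∞`. -/
def FinLogMeasure (E : Set ℝ) : Prop :=
  E ⊆ Set.Ioi 0 ∧ ∫⁻ r in E, ENNReal.ofReal r⁻¹ < ⊤

/-- `f` is a non-constant function. -/
def Nonconstant (f : ℂ → ℂ) : Prop := ¬ ∃ a : ℂ, ∀ z : ℂ, f z = a

/-- `f` has finite order: `limsup_{r→∞} log T(r,f) / log r < ∞`. -/
def FiniteOrder (f : ℂ → ℂ) : Prop :=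
  IsBoundedUnder (· ≤ ·) atTop fun r : ℝ => Real.log (nevT f r) / Real.log r

end

/-!
On a disc of radius `R > r` one has `log |f| = ∑ D(a) log |z - a| + u`, where `D` is the divisor of
`f` and `u` is harmonic. Hence `|log |f(z + c) / f(z + h)||` splits into two parts. The harmonic
part is controlled by the Poisson kernel and the mean of `|u|` on `|z| = R`. For the potential,
`|log |w + c| - log |w + h|| ≤ |c - h|^α / α * (|w + c|^(-α) + |w + h|^(-α))`, and the mean of
`|z - b|^(-α)` over `|z| = r` is `O(r^(-α))` uniformly in `b` when `α < 1`. Both are bounded by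
the characteristic `T` at a radius slightly larger than `R`; choosing these radii in
`(r, r + r^β]` and `α = β` gives
`m(r, f(z + c) / f(z + h)) = O(r^(2 - 3 * β) log r * T(r + r^β))`.

Since `T` has finite order, `T(r + r^β) ≤ 2 T(r)` off a set of finite logarithmic measure: the
exceptional radii with `2^n ≤ T(r) < 2^(n + 1)` lie in an interval of ratio
`1 + O(2^(-nκ))` with `κ > 0`. The result follows by taking `β` close enough to `1`.
-/

section DivisorCounting

open Function Function.locallyFinsuppWithin

variable {E : Type*} [NormedAddCommGroup E] [ProperSpace E] {D : locallyFinsupp E ℤ} {r t : ℝ}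

theorem finite_support_inter_norm_le (D : locallyFinsupp E ℤ) (r : ℝ) :
    {z : E | ‖z‖ ≤ r ∧ D z ≠ 0}.Finite := by
  refine ((toClosedBall r D).finiteSupport (isCompact_closedBall 0 |r|)).subset ?_
  rintro z ⟨hz, hD⟩
  rwa [mem_support, toClosedBall_eval_within D
    (mem_closedBall_zero_iff.2 (hz.trans (le_abs_self r)))]

/-- The finite set of points in the support of `D` lying in the closed ball of radius `r` about
the origin. -/
noncomputable def discSupport (D : locallyFinsupp E ℤ) (r : ℝ) : Finset E :=
  (finite_support_inter_norm_le D r).toFinset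

@[simp]
theorem mem_discSupport {z : E} : z ∈ discSupport D r ↔ ‖z‖ ≤ r ∧ D z ≠ 0 := by
  simp [discSupport]

/-- The unintegrated counting function `n(r, D)`: the degree of `D` on the closed ball of radius
`r` about the origin. Real-valued, since it is only ever used inside integrals and estimates. -/
noncomputable def discCount (D : locallyFinsupp E ℤ) (r : ℝ) : ℝ :=
  ∑ z ∈ discSupport D r, (D z : ℝ)

theorem discCount_eq_sum_ite (htr : t ≤ r) :
    discCount D t = ∑ z ∈ discSupport D r, if ‖z‖ ≤ t then (D z : ℝ) else 0 := by
  rw [← Finset.sum_filter, discCount]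
  congr 1
  ext z
  simp only [mem_discSupport, Finset.mem_filter]
  grind

theorem discCount_zero (D : locallyFinsupp E ℤ) : discCount D 0 = D 0 := by
  rw [discCount, Finset.sum_eq_single 0] <;> simp +contextual

theorem logCounting_eq_sum_discSupport (D : locallyFinsupp E ℤ) (hr : 0 ≤ r) :
    logCounting D r =
      ∑ z ∈ discSupport D r, (D z : ℝ) * Real.log (r * ‖z‖⁻¹) + D 0 * Real.log r := by
  change ∑ᶠ z, (toClosedBall r D z : ℝ) * Real.log (r * ‖z‖⁻¹) + D 0 * Real.log r = _
  have eval {z : E} (hz : ‖z‖ ≤ r) : toClosedBall r D z = D z :=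
    toClosedBall_eval_within D (by simpa using hz.trans (le_abs_self r))
  rw [finsum_eq_sum_of_support_subset (s := discSupport D r)]
  · congr 1
    refine Finset.sum_congr rfl fun z hz ↦ ?_
    rw [eval (mem_discSupport.1 hz).1]
  · intro z hz
    have hD : toClosedBall r D z ≠ 0 := by
      rintro h
      simp [h] at hz
    have hzr : ‖z‖ ≤ r := by
      simpa [abs_of_nonneg hr] using toClosedBall_support_subset_closedBall D hD
    simpa using ⟨hzr, eval hzr ▸ hD⟩

theorem intervalIntegrable_ite_le_div {a : ℝ} (ha : 0 < a) (r C : ℝ) :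
    IntervalIntegrable (fun t : ℝ ↦ (if a ≤ t then C else 0) / t) volume 0 r := by
  have hbdd (t : ℝ) : ‖(if a ≤ t then C else 0) / t‖ ≤ |C| / a := by
    split_ifs with hat
    · rw [norm_div, Real.norm_eq_abs, Real.norm_of_nonneg (ha.le.trans hat)]
      gcongr
    · simpa using by positivity
  have hmeas : Measurable fun t : ℝ ↦ (if a ≤ t then C else 0) / t :=
    (Measurable.ite measurableSet_Ici measurable_const measurable_const).div measurable_id
  exact (intervalIntegrable_const (c := |C| / a)).mono_fun hmeas.aestronglyMeasurable
    (.of_forall fun t ↦ (hbdd t).trans (le_abs_self _))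

theorem integral_ite_le_div {a : ℝ} (ha : 0 < a) (har : a ≤ r) (C : ℝ) :
    ∫ t in (0 : ℝ)..r, (if a ≤ t then C else 0) / t = C * Real.log (r * a⁻¹) := by
  have hind : ∀ t : ℝ, (if a ≤ t then C else 0) / t
      = (Set.Ici a).indicator (fun t ↦ C * t⁻¹) t := by
    intro t
    by_cases hat : a ≤ t <;> simp [hat, div_eq_mul_inv]
  simp only [hind]
  rw [intervalIntegral.integral_of_le (ha.le.trans har),
    setIntegral_indicator measurableSet_Ici]
  have : Set.Ioc 0 r ∩ Set.Ici a = Set.Icc a r := by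
    ext t; simp only [Set.mem_inter_iff, Set.mem_Ioc, Set.mem_Ici, Set.mem_Icc]; grind
  rw [this, integral_Icc_eq_integral_Ioc, ← intervalIntegral.integral_of_le har,
    intervalIntegral.integral_const_mul, integral_inv_of_pos ha (ha.trans_le har), div_eq_mul_inv]

theorem discCount_sub_discCount_zero [DecidableEq E] (ht : 0 ≤ t) (htr : t ≤ r) :
    discCount D t - discCount D 0 =
      ∑ z ∈ (discSupport D r).erase 0, if ‖z‖ ≤ t then (D z : ℝ) else 0 := by
  rw [discCount_eq_sum_ite htr, discCount_zero, sub_eq_iff_eq_add']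
  by_cases h : (0 : E) ∈ discSupport D r
  · simp [← Finset.add_sum_erase _ _ h, ht]
  · have : D 0 = 0 := by simpa [ht.trans htr] using h
    simp [this]

theorem logCounting_eq_integral_discCount (D : locallyFinsupp E ℤ) (hr : 0 ≤ r) :
    logCounting D r =
      (∫ t in (0 : ℝ)..r, (discCount D t - discCount D 0) / t) + discCount D 0 * Real.log r := by
  classical
  have hintegrand : Set.EqOn (fun t ↦ (discCount D t - discCount D 0) / t)
      (fun t ↦ ∑ z ∈ (discSupport D r).erase 0, (if ‖z‖ ≤ t then (D z : ℝ) else 0) / t)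
      (Set.uIcc 0 r) := by
    intro t ht
    rw [Set.uIcc_of_le hr] at ht
    simp only [discCount_sub_discCount_zero ht.1 ht.2, Finset.sum_div]
  have hnorm_pos {z : E} (hz : z ∈ (discSupport D r).erase 0) : 0 < ‖z‖ :=
    norm_pos_iff.2 (Finset.ne_of_mem_erase hz)
  rw [logCounting_eq_sum_discSupport D hr, discCount_zero,
    ← Finset.sum_erase (discSupport D r) (a := (0 : E)) (by simp), ← discCount_zero,
    intervalIntegral.integral_congr hintegrand,
    intervalIntegral.integral_finsetSum fun z hz ↦ intervalIntegrable_ite_le_div (hnorm_pos hz) _ _]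
  refine congrArg (· + _) (Finset.sum_congr rfl fun z hz ↦ ?_)
  exact (integral_ite_le_div (hnorm_pos hz)
    (mem_discSupport.1 (Finset.mem_of_mem_erase hz)).1 _).symm

theorem logCounting_eq_sum_discSupport_mul [DecidableEq E] (D : locallyFinsupp E ℤ) (hr : 0 ≤ r) :
    logCounting D r = ∑ z ∈ discSupport D r,
      (D z : ℝ) * (Real.log (r * ‖z‖⁻¹) + if z = 0 then Real.log r else 0) := by
  have hzero : D 0 * Real.log r =
      ∑ z ∈ discSupport D r, D z * if z = 0 then Real.log r else 0 := by
    have h0 : (0 : E) ∉ discSupport D r → D 0 = 0 := by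
      simpa using fun h ↦ h hr
    simp +contextual [-mem_discSupport, h0]
  rw [logCounting_eq_sum_discSupport D hr, hzero, ← Finset.sum_add_distrib]
  simp only [mul_add]

theorem discCount_mul_log_le_logCounting (hD : 0 ≤ D) {R R' : ℝ} (hR : 1 ≤ R) (hRR' : R ≤ R') :
    discCount D R * Real.log (R' / R) ≤ logCounting D R' := by
  classical
  have hDnn (z : E) : (0 : ℝ) ≤ D z := Int.cast_nonneg (hD z)
  have hweight {z : E} {s : ℝ} (hs : 1 ≤ s) (hsR' : s ≤ R') (hz : ‖z‖ ≤ s) :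
      Real.log (R' / s) ≤ Real.log (R' * ‖z‖⁻¹) + if z = 0 then Real.log R' else 0 := by
    rcases eq_or_ne z 0 with rfl | hz0
    · have := Real.log_nonneg hs
      simpa [Real.log_div (by linarith : R' ≠ 0) (by linarith : s ≠ 0)]
    · have := norm_pos_iff.2 hz0
      have hR'₀ : 0 < R' := zero_lt_one.trans_le (hs.trans hsR')
      rw [if_neg hz0, add_zero, ← div_eq_mul_inv]
      gcongr
  rw [logCounting_eq_sum_discSupport_mul D (by linarith), discCount, Finset.sum_mul]
  calc ∑ z ∈ discSupport D R, D z * Real.log (R' / R)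
      ≤ ∑ z ∈ discSupport D R, D z *
          (Real.log (R' * ‖z‖⁻¹) + if z = 0 then Real.log R' else 0) := by
        gcongr with z hz
        · exact hDnn z
        · exact hweight hR hRR' (mem_discSupport.1 hz).1
    _ ≤ _ := by
        refine Finset.sum_le_sum_of_subset_of_nonneg (fun z hz ↦ ?_) fun z hz _ ↦ ?_
        · rw [mem_discSupport] at hz ⊢
          exact ⟨hz.1.trans hRR', hz.2⟩
        · refine mul_nonneg (hDnn z) ?_
          simpa [div_self (by linarith : R' ≠ 0)] using
            hweight (hR.trans hRR') le_rfl (mem_discSupport.1 hz).1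

end DivisorCounting

section ValueDistribution

open MeromorphicOn ValueDistribution

variable {f : ℂ → ℂ} {r : ℝ}

theorem nevm_eq_proximity (f : ℂ → ℂ) (r : ℝ) : nevm f r = proximity f ⊤ r := by
  simp only [nevm, proximity_top, Real.circleAverage_def, smul_eq_mul, circ, circleMap, zero_add,
    logPlus, Real.posLog, max_comm]

theorem exists_analyticAt_pow_mul_eq_iff {x : ℂ} (hf : MeromorphicAt f x) (n : ℕ) :
    (∃ g : ℂ → ℂ, AnalyticAt ℂ g x ∧ ∀ᶠ w in 𝓝[≠] x, (w - x) ^ n * f w = g w) ↔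
      ((meromorphicOrderAt f x).untop₀)⁻.toNat ≤ n := by
  have hpow : MeromorphicAt (fun w : ℂ ↦ (w - x) ^ n) x := by fun_prop
  have hmer : MeromorphicAt (fun w ↦ (w - x) ^ n * f w) x := hpow.mul hf
  have horder : meromorphicOrderAt (fun w ↦ (w - x) ^ n * f w) x
      = n + meromorphicOrderAt f x := by
    rw [← fun_meromorphicOrderAt_pow_id_sub_const (x := x)]
    exact meromorphicOrderAt_mul hpow hf
  refine hmer.meromorphicOrderAt_nonneg_iff.symm.trans ?_
  rw [horder]
  cases meromorphicOrderAt f x with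
  | top => simp
  | coe m =>
    norm_cast
    rw [WithTop.untop₀_coe, negPart_def]
    simp only [Int.toNat_le, sup_le_iff]
    omega

theorem poleOrd_eq_negPart_divisor (hf : Meromorphic f) (x : ℂ) :
    (poleOrd f x : ℤ) = (divisor f Set.univ)⁻ x := by
  have hord : poleOrd f x = ((meromorphicOrderAt f x).untop₀)⁻.toNat := by
    simp only [poleOrd, exists_analyticAt_pow_mul_eq_iff (hf x)]
    exact csInf_Ici
  rw [hord, Int.toNat_of_nonneg (negPart_nonneg _), Function.locallyFinsuppWithin.negPart_apply,
    divisor_apply (fun z _ ↦ hf z) (Set.mem_univ x)]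

theorem nevn_eq_discCount (hf : Meromorphic f) (r : ℝ) :
    nevn f r = discCount (divisor f Set.univ)⁻ r := by
  rw [nevn, finsum_mem_eq_sum_of_inter_support_eq (t := discSupport (divisor f Set.univ)⁻ r),
    discCount, Nat.cast_sum]
  · exact Finset.sum_congr rfl fun z _ ↦ by rw [← poleOrd_eq_negPart_divisor hf, Int.cast_natCast]
  · ext z
    simp [← poleOrd_eq_negPart_divisor hf]

theorem nevN_eq_logCounting (hf : Meromorphic f) (hr : 0 ≤ r) :
    nevN f r = logCounting f ⊤ r := by
  simp only [nevN, nevn_eq_discCount hf, logCounting_top, logCounting_eq_integral_discCount _ hr]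

theorem nevT_eq_characteristic (hf : Meromorphic f) (hr : 0 ≤ r) :
    nevT f r = characteristic f ⊤ r := by
  rw [nevT, nevm_eq_proximity, nevN_eq_logCounting hf hr, characteristic, Pi.add_apply]

end ValueDistribution

section CircleAverage

open Real

variable {f g : ℂ → ℝ} {c : ℂ} {r α : ℝ}

theorem abs_mul_sin_sub_arg_le_norm_circleMap_sub (c b : ℂ) (r θ : ℝ) :
    |r * sin (θ - (b - c).arg)| ≤ ‖circleMap c r θ - b‖ := by
  set φ := (b - c).arg
  have hrot : (circleMap c r θ - b) * Complex.exp (-φ * Complex.I) =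
      r * Complex.exp ((θ - φ : ℝ) * Complex.I) - ‖b - c‖ := by
    have hb : b = c + ‖b - c‖ * Complex.exp (φ * Complex.I) := by
      rw [Complex.norm_mul_exp_arg_mul_I, add_sub_cancel]
    nth_rw 1 [hb]
    rw [circleMap, add_sub_add_left_eq_sub, sub_mul, mul_assoc, mul_assoc, ← Complex.exp_add,
      ← Complex.exp_add, neg_mul, add_neg_cancel, Complex.exp_zero, mul_one]
    push_cast
    ring_nf
  have him := Complex.abs_im_le_norm ((circleMap c r θ - b) * Complex.exp (-φ * Complex.I))
  rw [norm_mul, ← Complex.ofReal_neg, Complex.norm_exp_ofReal_mul_I, mul_one,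
    Complex.ofReal_neg, hrot] at him
  rwa [Complex.sub_im, Complex.im_ofReal_mul, Complex.exp_ofReal_mul_I_im, Complex.ofReal_im,
    sub_zero] at him

theorem ae_sin_sub_ne_zero (φ : ℝ) : ∀ᵐ θ : ℝ, sin (θ - φ) ≠ 0 := by
  have hcount : {θ : ℝ | sin (θ - φ) = 0}.Countable := by
    refine (Set.countable_range fun n : ℤ ↦ n * π + φ).mono fun θ hθ ↦ ?_
    obtain ⟨n, hn⟩ := sin_eq_zero_iff.1 hθ
    exact ⟨n, by simp [hn]⟩
  simpa [ae_iff] using hcount.measure_zero volume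

theorem intervalIntegrable_abs_sin_rpow_neg (hα₀ : 0 ≤ α) (hα : α < 1) (a b : ℝ) :
    IntervalIntegrable (fun θ ↦ |sin θ| ^ (-α)) volume a b := by
  have hperiodic : Function.Periodic (fun θ ↦ |sin θ| ^ (-α)) π := by
    intro θ
    simp [sin_add_pi]
  have hdom : IntervalIntegrable (fun θ : ℝ ↦ (2 / π * |θ|) ^ (-α)) volume
      (-(π / 2)) (π / 2) := by
    refine intervalIntegrable_of_even (fun θ ↦ by rw [abs_neg]) fun θ hθ ↦ ?_
    refine ((intervalIntegral.intervalIntegrable_rpow' (r := -α) (by linarith)).const_mul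
      ((2 / π) ^ (-α))).congr fun t ht ↦ ?_
    rw [Set.uIoc_of_le hθ.le] at ht
    rw [abs_of_pos ht.1, mul_rpow (by positivity) ht.1.le]
  refine hperiodic.intervalIntegrable (t := -(π / 2)) pi_pos.ne' ?_ a b
  rw [show -(π / 2) + π = π / 2 by ring]
  refine hdom.mono_fun ?_ ?_
  · exact (continuous_sin.abs.measurable.pow_const _).aestronglyMeasurable
  filter_upwards [ae_restrict_mem measurableSet_uIoc, ae_restrict_of_ae (ae_sin_sub_ne_zero 0)]
    with θ hθ hsin
  rw [Set.uIoc_of_le (by linarith [pi_pos])] at hθ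
  rw [norm_of_nonneg (by positivity), norm_of_nonneg (by positivity)]
  have hθ₀ : 0 < |θ| := abs_pos.2 (by rintro rfl; simp at hsin)
  exact rpow_le_rpow_of_nonpos (by positivity)
    (mul_abs_le_abs_sin (abs_le.2 ⟨hθ.1.le, hθ.2⟩)) (by linarith)

/-- The mean value of `|sin| ^ (-α)` over a period. Up to the factor `r ^ (-α)` it bounds the
average of `‖z - b‖ ^ (-α)` over any circle of radius `r`, uniformly in `b`. -/
noncomputable def absSinRpowNegMean (α : ℝ) : ℝ :=
  (2 * π)⁻¹ * ∫ θ in (0 : ℝ)..2 * π, |sin θ| ^ (-α)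

theorem absSinRpowNegMean_nonneg (α : ℝ) : 0 ≤ absSinRpowNegMean α :=
  mul_nonneg (by positivity) <| intervalIntegral.integral_nonneg two_pi_pos.le fun _ _ ↦
    by positivity

theorem ae_norm_circleMap_sub_rpow_neg_le (hα : 0 ≤ α) (c b : ℂ) (hr : 0 < r) :
    ∀ᵐ θ : ℝ, ‖circleMap c r θ - b‖ ^ (-α) ≤ r ^ (-α) * |sin (θ - (b - c).arg)| ^ (-α) := by
  filter_upwards [ae_sin_sub_ne_zero (b - c).arg] with θ hθ
  rw [← abs_of_pos hr, ← mul_rpow (abs_nonneg _) (abs_nonneg _), ← abs_mul, abs_of_pos hr]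
  exact rpow_le_rpow_of_nonpos (abs_pos.2 (mul_ne_zero hr.ne' hθ))
    (abs_mul_sin_sub_arg_le_norm_circleMap_sub c b r θ) (by linarith)

theorem circleIntegrable_norm_sub_rpow_neg (hα₀ : 0 ≤ α) (hα : α < 1) (c b : ℂ) (hr : 0 < r) :
    CircleIntegrable (fun z ↦ ‖z - b‖ ^ (-α)) c r := by
  have hdom := ((intervalIntegrable_abs_sin_rpow_neg hα₀ hα (0 - (b - c).arg)
    (2 * π - (b - c).arg)).comp_sub_right (b - c).arg).const_mul (r ^ (-α))
  rw [sub_add_cancel, sub_add_cancel] at hdom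
  refine hdom.mono_fun ?_ ?_
  · have hcont : Continuous fun θ ↦ ‖circleMap c r θ - b‖ := by fun_prop
    exact (hcont.measurable.pow_const _).aestronglyMeasurable
  · filter_upwards [ae_restrict_of_ae (ae_norm_circleMap_sub_rpow_neg_le hα₀ c b hr)] with θ hθ
    rwa [norm_of_nonneg (by positivity), norm_of_nonneg (by positivity)]

theorem circleAverage_norm_sub_rpow_neg_le (hα₀ : 0 ≤ α) (hα : α < 1) (c b : ℂ) (hr : 0 < r) :
    circleAverage (fun z ↦ ‖z - b‖ ^ (-α)) c r ≤
      absSinRpowNegMean α * r ^ (-α) := by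
  set φ := (b - c).arg
  have hperiodic : Function.Periodic (fun θ ↦ |sin θ| ^ (-α)) (2 * π) := by
    intro θ
    simp [sin_add_two_pi]
  have hdom := ((intervalIntegrable_abs_sin_rpow_neg hα₀ hα (0 - φ) (2 * π - φ)).comp_sub_right
    φ).const_mul (r ^ (-α))
  rw [sub_add_cancel, sub_add_cancel] at hdom
  rw [circleAverage_def, smul_eq_mul, absSinRpowNegMean, mul_assoc]
  gcongr
  calc ∫ θ in (0 : ℝ)..2 * π, ‖circleMap c r θ - b‖ ^ (-α)
      ≤ ∫ θ in (0 : ℝ)..2 * π, r ^ (-α) * |sin (θ - φ)| ^ (-α) :=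
        intervalIntegral.integral_mono_ae two_pi_pos.le
          (circleIntegrable_norm_sub_rpow_neg hα₀ hα c b hr) hdom
          (ae_norm_circleMap_sub_rpow_neg_le hα₀ c b hr)
    _ = r ^ (-α) * ∫ θ in (0 - φ)..(0 - φ) + 2 * π, |sin θ| ^ (-α) := by
        rw [intervalIntegral.integral_const_mul,
          intervalIntegral.integral_comp_sub_right (fun θ ↦ |sin θ| ^ (-α)) φ]
        ring_nf
    _ = (∫ θ in (0 : ℝ)..2 * π, |sin θ| ^ (-α)) * r ^ (-α) := by
        rw [hperiodic.intervalIntegral_add_eq (0 - φ) 0, zero_add, mul_comm]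

theorem circleAverage_mono_of_finite (hr : r ≠ 0) (hf : CircleIntegrable f c r)
    (hg : CircleIntegrable g c r) {B : Set ℂ} (hB : B.Finite)
    (hfg : ∀ z ∈ sphere c |r| \ B, f z ≤ g z) :
    circleAverage f c r ≤ circleAverage g c r := by
  have hmin : f =ᶠ[codiscreteWithin (sphere c |r|)] fun z ↦ min (f z) (g z) := by
    filter_upwards [compl_finite_mem_codiscreteWithin hB, self_mem_codiscreteWithin _]
      with z hzB hz
    rw [min_eq_left (hfg z ⟨hz, hzB⟩)]
  rw [circleAverage_congr_codiscreteWithin hmin hr]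
  exact circleAverage_mono (hf.congr_codiscreteWithin hmin) hg fun z _ ↦ min_le_right _ _

theorem circleAverage_abs_sum_mul_le {ι : Type*} (s : Finset ι) (w : ι → ℝ) {k : ι → ℂ → ℝ}
    {M : ℝ} (hk : ∀ a ∈ s, CircleIntegrable (k a) c r)
    (hM : ∀ a ∈ s, circleAverage (fun z ↦ |k a z|) c r ≤ M) :
    circleAverage (fun z ↦ |∑ a ∈ s, w a * k a z|) c r ≤ (∑ a ∈ s, |w a|) * M := by
  have hwk : ∀ a ∈ s, CircleIntegrable (fun z ↦ |w a| * |k a z|) c r :=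
    fun a ha ↦ (hk a ha).abs.const_smul
  calc circleAverage (fun z ↦ |∑ a ∈ s, w a * k a z|) c r
      ≤ circleAverage (fun z ↦ ∑ a ∈ s, |w a| * |k a z|) c r := by
        refine circleAverage_mono (CircleIntegrable.fun_sum s fun a ha ↦
          (hk a ha).const_smul (a := w a)).abs (CircleIntegrable.fun_sum s hwk) fun z _ ↦ ?_
        simpa only [abs_mul] using Finset.abs_sum_le_sum_abs (fun a ↦ w a * k a z) s
    _ = ∑ a ∈ s, |w a| * circleAverage (fun z ↦ |k a z|) c r := by
        rw [circleAverage_fun_sum hwk]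
        exact Finset.sum_congr rfl fun a _ ↦
          circleAverage_fun_smul (a := |w a|) (f := fun z ↦ |k a z|)
    _ ≤ (∑ a ∈ s, |w a|) * M := by
        rw [Finset.sum_mul]
        gcongr with a ha
        exact hM a ha

theorem circleAverage_abs_log_norm_sub_le {b : ℂ} (hr : 1 ≤ r) (hb : b ∈ closedBall c r) :
    circleAverage (fun z ↦ |log ‖z - b‖|) c r ≤ 2 * log (2 * r) := by
  have hint : CircleIntegrable (fun z ↦ log ‖z - b‖) c r := circleIntegrable_log_norm_sub_const r
  have hlog : 0 ≤ log (2 * r) := log_nonneg (by linarith)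
  have hr₀ : |r| = r := abs_of_nonneg (by linarith)
  calc circleAverage (fun z ↦ |log ‖z - b‖|) c r
      ≤ circleAverage (fun z ↦ 2 * log (2 * r) - log ‖z - b‖) c r := by
        refine circleAverage_mono hint.abs ((circleIntegrable_const _ _ _).sub hint) fun z hz ↦ ?_
        have hdist : ‖z - b‖ ≤ 2 * r := by
          rw [hr₀, mem_sphere] at hz
          rw [← dist_eq_norm]
          linarith [dist_triangle_right z b c, mem_closedBall.1 hb]
        have hle : log ‖z - b‖ ≤ log (2 * r) := by
          rcases (norm_nonneg (z - b)).eq_or_lt with h | h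
          · rwa [← h, log_zero]
          · exact log_le_log h hdist
        exact abs_le.2 ⟨by linarith, by linarith⟩
    _ = 2 * log (2 * r) - log r := by
        rw [circleAverage_fun_sub (circleIntegrable_const _ _ _) hint, circleAverage_const,
          circleAverage_log_norm_sub_const_of_mem_closedBall (by rwa [hr₀])]
    _ ≤ 2 * log (2 * r) := by linarith [log_nonneg hr]

end CircleAverage

section LogDifference

open Real

variable {α x y ε : ℝ}

theorem log_one_add_le_rpow_div (hα₀ : 0 < α) (hα : α ≤ 1) (hx : 0 ≤ x) :
    log (1 + x) ≤ x ^ α / α := by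
  rw [le_div_iff₀ hα₀, mul_comm, ← log_rpow (by positivity)]
  calc log ((1 + x) ^ α) ≤ (1 + x) ^ α - 1 := log_le_sub_one_of_pos (by positivity)
    _ ≤ x ^ α := by
      have := rpow_add_le_add_rpow zero_le_one hx hα₀.le hα
      rw [one_rpow] at this
      linarith

theorem log_sub_log_le_rpow (hα₀ : 0 < α) (hα : α ≤ 1) (hx : 0 < x) (hy : 0 < y) (hε : 0 ≤ ε)
    (hxy : x - y ≤ ε) : log x - log y ≤ ε ^ α / α * y ^ (-α) := by
  calc log x - log y = log (x / y) := (log_div hx.ne' hy.ne').symm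
    _ ≤ log (1 + ε / y) := by
      gcongr
      rw [← div_self hy.ne', ← add_div]
      gcongr
      linarith
    _ ≤ (ε / y) ^ α / α := log_one_add_le_rpow_div hα₀ hα (by positivity)
    _ = ε ^ α / α * y ^ (-α) := by
      rw [div_rpow hε hy.le, rpow_neg hy.le]
      ring

theorem abs_log_sub_log_le_rpow (hα₀ : 0 < α) (hα : α ≤ 1) (hx : 0 < x) (hy : 0 < y)
    (hxy : |x - y| ≤ ε) : |log x - log y| ≤ ε ^ α / α * (x ^ (-α) + y ^ (-α)) := by
  have hε : 0 ≤ ε := (abs_nonneg _).trans hxy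
  have hx' : 0 ≤ ε ^ α / α * x ^ (-α) := by positivity
  have hy' : 0 ≤ ε ^ α / α * y ^ (-α) := by positivity
  have hle := log_sub_log_le_rpow hα₀ hα hx hy hε (abs_le.1 hxy).2
  have hge := log_sub_log_le_rpow hα₀ hα hy hx hε (by linarith [(abs_le.1 hxy).1])
  rw [mul_add]
  exact abs_le.2 ⟨by linarith, by linarith⟩

theorem posLog_div_le_abs_log_sub_log (x y : ℝ) : log⁺ (x / y) ≤ |log x - log y| := by
  rcases eq_or_ne x 0 with rfl | hx
  · simp
  rcases eq_or_ne y 0 with rfl | hy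
  · simp
  rw [posLog, log_div hx hy]
  exact max_le (abs_nonneg _) (le_abs_self _)

theorem abs_log_eq_posLog_add_posLog_inv (x : ℝ) : |log x| = log⁺ x + log⁺ x⁻¹ := by
  have hsub := posLog_sub_posLog_inv (x := x)
  have hhalf := half_mul_log_add_log_abs (x := x)
  linarith

end LogDifference

section Poisson

open InnerProductSpace

variable {u : ℂ → ℝ} {c w w' : ℂ} {R d : ℝ}

theorem norm_herglotzRieszKernel_sub_le {z : ℂ} (hd : 0 < d) (hz : ‖z - c‖ = R)
    (hw : ‖w - c‖ ≤ R - d) (hw' : ‖w' - c‖ ≤ R - d) :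
    ‖herglotzRieszKernel c w z - herglotzRieszKernel c w' z‖ ≤ 2 * R * ‖w - w'‖ / d ^ 2 := by
  have hzw {v : ℂ} (hv : ‖v - c‖ ≤ R - d) : d ≤ ‖z - v‖ := by
    have := norm_sub_norm_le (z - c) (v - c)
    rw [sub_sub_sub_cancel_right] at this
    linarith
  have hne {v : ℂ} (hv : ‖v - c‖ ≤ R - d) : z - c - (v - c) ≠ 0 := by
    rw [sub_sub_sub_cancel_right]
    exact norm_pos_iff.1 (hd.trans_le (hzw hv))
  have hdiff : herglotzRieszKernel c w z - herglotzRieszKernel c w' z =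
      2 * (z - c) * (w - w') / ((z - w) * (z - w')) := by
    rw [herglotzRieszKernel_def, herglotzRieszKernel_def, div_sub_div _ _ (hne hw) (hne hw')]
    congr 1 <;> ring
  rw [hdiff, norm_div, norm_mul, norm_mul, norm_mul, hz, Complex.norm_ofNat, sq]
  have := hz ▸ norm_nonneg (z - c)
  gcongr
  exacts [hzw hw, hzw hw']

theorem abs_sub_le_mul_circleAverage_abs_of_harmonic (hd : 0 < d)
    (hu : HarmonicOnNhd u (closedBall c R)) (hw : ‖w - c‖ ≤ R - d) (hw' : ‖w' - c‖ ≤ R - d) :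
    |u w - u w'| ≤ 2 * R * ‖w - w'‖ / d ^ 2 * Real.circleAverage (fun z ↦ |u z|) c R := by
  have hR : 0 < R := by linarith [norm_nonneg (w - c)]
  have hmem {v : ℂ} (hv : ‖v - c‖ ≤ R - d) : v ∈ ball c R := by
    rw [mem_ball_iff_norm]
    linarith
  have hcont : ContinuousOn u (sphere c R) := fun z hz ↦
    (hu z (sphere_subset_closedBall hz)).1.continuousAt.continuousWithinAt
  have hint {v : ℂ} (hv : ‖v - c‖ ≤ R - d) :
      CircleIntegrable ((Complex.re ∘ herglotzRieszKernel c v) • u) c R := by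
    refine ContinuousOn.circleIntegrable hR.le (.smul ?_ hcont)
    exact Complex.continuous_re.comp_continuousOn
      (by simpa [abs_of_pos hR] using continuousOn_herglotzRieszKernel_sphere (hmem hv))
  rw [← hu.circleAverage_re_herglotzRieszKernel_smul (hmem hw),
    ← hu.circleAverage_re_herglotzRieszKernel_smul (hmem hw'),
    ← Real.circleAverage_sub (hint hw) (hint hw'), ← smul_eq_mul, ← Real.circleAverage_fun_smul]
  refine Real.abs_circleAverage_le_circleAverage_abs.trans <| Real.circleAverage_mono
    ((hint hw).sub (hint hw')).abs (hcont.circleIntegrable hR.le).abs.const_smul fun z hz ↦ ?_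
  rw [abs_of_pos hR, mem_sphere_iff_norm] at hz
  change |(herglotzRieszKernel c w z).re * u z - (herglotzRieszKernel c w' z).re * u z| ≤
    2 * R * ‖w - w'‖ / d ^ 2 * |u z|
  rw [← sub_mul, abs_mul, ← Complex.sub_re]
  gcongr
  exact (Complex.abs_re_le_norm _).trans (norm_herglotzRieszKernel_sub_le hd hz hw hw')

end Poisson

section LogPotential

open Function InnerProductSpace MeromorphicOn Real ValueDistribution

variable {f : ℂ → ℂ} {D : locallyFinsupp ℂ ℤ} {c h : ℂ} {r R d α : ℝ}

/-- The logarithmic potential `∑ D(a) log |z - a|` of the part of `D` in the closed disc of radius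
`R` about the origin. For the divisor of a meromorphic `f` it is the part of `log |f|` that is
not harmonic there. -/
noncomputable def discPotential (D : locallyFinsupp ℂ ℤ) (R : ℝ) (z : ℂ) : ℝ :=
  ∑ a ∈ discSupport D R, (D a : ℝ) * log ‖z - a‖

theorem discCount_abs (D : locallyFinsupp ℂ ℤ) (R : ℝ) :
    discCount |D| R = ∑ a ∈ discSupport D R, |(D a : ℝ)| := by
  have habs (a : ℂ) : |D| a = |D a| := rfl
  have hsupp : discSupport |D| R = discSupport D R := by
    ext a
    simp [habs]
  simp only [discCount, hsupp, habs, Int.cast_abs]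

theorem exists_harmonicOnNhd_log_norm_eq_discPotential_add (hf : Meromorphic f)
    (hord : ∀ z, meromorphicOrderAt f z ≠ ⊤) (R : ℝ) :
    ∃ u : ℂ → ℝ, HarmonicOnNhd u (closedBall 0 R) ∧
      {z ∈ closedBall 0 R |
        log ‖f z‖ ≠ discPotential (divisor f Set.univ) R z + u z}.Finite := by
  have hfR : MeromorphicOn f (closedBall 0 R) := fun z _ ↦ hf z
  obtain ⟨g, hg, hg₀, hfg⟩ := hfR.extract_zeros_poles (fun z ↦ hord z)
    ((divisor f (closedBall 0 R)).finiteSupport (isCompact_closedBall 0 R))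
  refine ⟨fun z ↦ log ‖g z‖, fun z hz ↦ (hg z hz).harmonicAt_log_norm (hg₀ ⟨z, hz⟩), ?_⟩
  have hdiv {a : ℂ} (ha : ‖a‖ ≤ R) : divisor f (closedBall 0 R) a = divisor f Set.univ a := by
    rw [divisor_apply hfR (by simpa using ha), divisor_apply (fun z _ ↦ hf z) (Set.mem_univ a)]
  have hpotential (z : ℂ) :
      (∑ᶠ a, fun x ↦ (divisor f (closedBall 0 R) a : ℝ) * log ‖x - a‖) z =
        discPotential (divisor f Set.univ) R z := by
    rw [finsum_eq_sum_of_support_subset (s := discSupport (divisor f Set.univ) R),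
      Finset.sum_apply, discPotential]
    · refine Finset.sum_congr rfl fun a ha ↦ ?_
      rw [hdiv (mem_discSupport.1 ha).1]
    · intro a ha
      have hne : divisor f (closedBall 0 R) a ≠ 0 := fun h₀ ↦ ha (by ext; simp [h₀])
      have haR : ‖a‖ ≤ R := by
        simpa using (divisor f (closedBall 0 R)).supportWithinDomain hne
      simpa using ⟨haR, hdiv haR ▸ hne⟩
  refine ((isCompact_closedBall (0 : ℂ) R).finite_sdiff_of_mem_codiscreteWithin
    (extract_zeros_poles_log hg₀ hfg)).subset fun z hz ↦ ⟨hz.1, fun heq ↦ hz.2 ?_⟩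
  rw [← hpotential]
  exact heq

theorem circleIntegrable_log_norm_add_sub (b a c : ℂ) (r : ℝ) :
    CircleIntegrable (fun z ↦ log ‖z + b - a‖) c r := by
  simpa only [sub_sub_eq_add_sub] using circleIntegrable_log_norm_sub_const (a := a - b) r

theorem circleIntegrable_discPotential_add (D : locallyFinsupp ℂ ℤ) (R : ℝ) (b c : ℂ) (r : ℝ) :
    CircleIntegrable (fun z ↦ discPotential D R (z + b)) c r :=
  CircleIntegrable.fun_sum _ fun a _ ↦ (circleIntegrable_log_norm_add_sub b a c r).const_smul

theorem circleAverage_abs_discPotential_le (D : locallyFinsupp ℂ ℤ) (hR : 1 ≤ R) :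
    circleAverage (fun z ↦ |discPotential D R z|) 0 R ≤ discCount |D| R * (2 * log (2 * R)) := by
  rw [discCount_abs]
  refine circleAverage_abs_sum_mul_le _ _ (fun a _ ↦ circleIntegrable_log_norm_sub_const R)
    fun a ha ↦ circleAverage_abs_log_norm_sub_le hR ?_
  simpa using (mem_discSupport.1 ha).1

theorem circleAverage_abs_log_shift_sub_le (hα₀ : 0 < α) (hα : α < 1) (c h a : ℂ) (hr : 0 < r) :
    circleAverage (fun z ↦ |log ‖z + c - a‖ - log ‖z + h - a‖|) 0 r ≤
      2 * (‖c - h‖ ^ α / α) * absSinRpowNegMean α * r ^ (-α) := by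
  have hint (b : ℂ) : CircleIntegrable (fun z ↦ ‖z + b - a‖ ^ (-α)) 0 r := by
    simpa only [sub_sub_eq_add_sub] using
      circleIntegrable_norm_sub_rpow_neg hα₀.le hα 0 (a - b) hr
  have havg (b : ℂ) : circleAverage (fun z ↦ ‖z + b - a‖ ^ (-α)) 0 r ≤
      absSinRpowNegMean α * r ^ (-α) := by
    simpa only [sub_sub_eq_add_sub] using
      circleAverage_norm_sub_rpow_neg_le hα₀.le hα 0 (a - b) hr
  calc circleAverage (fun z ↦ |log ‖z + c - a‖ - log ‖z + h - a‖|) 0 r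
      ≤ circleAverage (fun z ↦ (‖c - h‖ ^ α / α) *
          (‖z + c - a‖ ^ (-α) + ‖z + h - a‖ ^ (-α))) 0 r := by
        refine circleAverage_mono_of_finite hr.ne'
          ((circleIntegrable_log_norm_add_sub c a 0 r).sub
            (circleIntegrable_log_norm_add_sub h a 0 r)).abs
          ((hint c).add (hint h)).const_smul (Set.toFinite {a - c, a - h}) fun z hz ↦ ?_
        simp only [Set.mem_sdiff, Set.mem_insert_iff, Set.mem_singleton_iff, not_or,
          ← sub_ne_zero (b := a - _), sub_sub_eq_add_sub] at hz
        refine abs_log_sub_log_le_rpow hα₀ hα.le (norm_pos_iff.2 hz.2.1) (norm_pos_iff.2 hz.2.2)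
          ((abs_norm_sub_norm_le _ _).trans_eq ?_)
        rw [sub_sub_sub_cancel_right, add_sub_add_left_eq_sub]
    _ = (‖c - h‖ ^ α / α) * (circleAverage (fun z ↦ ‖z + c - a‖ ^ (-α)) 0 r +
          circleAverage (fun z ↦ ‖z + h - a‖ ^ (-α)) 0 r) := by
        rw [← circleAverage_fun_add (hint c) (hint h)]
        exact circleAverage_fun_smul (a := ‖c - h‖ ^ α / α)
          (f := fun z ↦ ‖z + c - a‖ ^ (-α) + ‖z + h - a‖ ^ (-α))
    _ ≤ (‖c - h‖ ^ α / α) *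
          (absSinRpowNegMean α * r ^ (-α) + absSinRpowNegMean α * r ^ (-α)) := by
        gcongr
        exacts [havg c, havg h]
    _ = _ := by ring

theorem circleAverage_abs_discPotential_shift_sub_le (D : locallyFinsupp ℂ ℤ) (R : ℝ)
    (hα₀ : 0 < α) (hα : α < 1) (c h : ℂ) (hr : 0 < r) :
    circleAverage (fun z ↦ |discPotential D R (z + c) - discPotential D R (z + h)|) 0 r ≤
      discCount |D| R * (2 * (‖c - h‖ ^ α / α) * absSinRpowNegMean α * r ^ (-α)) := by
  simp only [discPotential, ← Finset.sum_sub_distrib, ← mul_sub, discCount_abs]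
  exact circleAverage_abs_sum_mul_le _ _ (fun a _ ↦ (circleIntegrable_log_norm_add_sub c a 0 r).sub
    (circleIntegrable_log_norm_add_sub h a 0 r))
    fun a _ ↦ circleAverage_abs_log_shift_sub_le hα₀ hα c h a hr

theorem circleAverage_abs_le_of_log_norm_eq_discPotential_add (hf : Meromorphic f) (hR : 1 ≤ R)
    {u : ℂ → ℝ} (hu : HarmonicOnNhd u (closedBall 0 R))
    (hfu : {z ∈ closedBall 0 R | log ‖f z‖ ≠ discPotential D R z + u z}.Finite) :
    circleAverage (fun z ↦ |u z|) 0 R ≤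
      proximity f ⊤ R + proximity f⁻¹ ⊤ R + discCount |D| R * (2 * log (2 * R)) := by
  have hR₀ : 0 < R := by linarith
  have hcont : ContinuousOn u (sphere 0 R) := fun z hz ↦
    (hu z (sphere_subset_closedBall hz)).1.continuousAt.continuousWithinAt
  have hpos : CircleIntegrable (fun z ↦ log⁺ ‖f z‖) 0 R :=
    circleIntegrable_posLog_norm fun z _ ↦ hf z
  have hneg : CircleIntegrable (fun z ↦ log⁺ ‖f⁻¹ z‖) 0 R :=
    circleIntegrable_posLog_norm fun z _ ↦ (hf z).inv
  have hsum : CircleIntegrable (fun z ↦ log⁺ ‖f z‖ + log⁺ ‖f⁻¹ z‖) 0 R := hpos.add hneg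
  have hpot : CircleIntegrable (fun z ↦ |discPotential D R z|) 0 R :=
    CircleIntegrable.abs (f := fun z ↦ discPotential D R z)
      (by simpa only [add_zero] using circleIntegrable_discPotential_add D R 0 0 R)
  calc circleAverage (fun z ↦ |u z|) 0 R
      ≤ circleAverage (fun z ↦ log⁺ ‖f z‖ + log⁺ ‖f⁻¹ z‖ + |discPotential D R z|) 0 R := by
        refine circleAverage_mono_of_finite hR₀.ne' (hcont.circleIntegrable hR₀.le).abs
          (hsum.add hpot) hfu fun z ⟨hz, hzB⟩ ↦ ?_
        rw [abs_of_pos hR₀] at hz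
        have hlog : log ‖f z‖ = discPotential D R z + u z := by
          by_contra hne
          exact hzB ⟨sphere_subset_closedBall hz, hne⟩
        rw [Pi.inv_apply, norm_inv, ← abs_log_eq_posLog_add_posLog_inv,
          ← sub_eq_of_eq_add' hlog]
        exact abs_sub _ _
    _ = proximity f ⊤ R + proximity f⁻¹ ⊤ R +
          circleAverage (fun z ↦ |discPotential D R z|) 0 R := by
        rw [circleAverage_fun_add hsum hpot, circleAverage_fun_add hpos hneg,
          proximity_top, proximity_top]
    _ ≤ _ := by gcongr; exact circleAverage_abs_discPotential_le D hR

theorem meromorphic_shift_div (hf : Meromorphic f) (c h : ℂ) :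
    Meromorphic fun z ↦ f (z + c) / f (z + h) := fun z ↦
  MeromorphicAt.fun_div ((hf (z + c)).comp_analyticAt (g := (· + c)) (by fun_prop))
    ((hf (z + h)).comp_analyticAt (g := (· + h)) (by fun_prop))

theorem posLog_norm_div_le_of_log_norm_eq_add {a b : ℂ} {p q v w : ℝ} (ha : log ‖a‖ = p + v)
    (hb : log ‖b‖ = q + w) : log⁺ ‖a / b‖ ≤ |p - q| + |v - w| := by
  rw [norm_div]
  refine (posLog_div_le_abs_log_sub_log _ _).trans ?_
  rw [ha, hb, add_sub_add_comm]
  exact abs_add_le _ _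

theorem proximity_shift_div_le_of_log_norm_eq_discPotential_add (hf : Meromorphic f)
    {u : ℂ → ℝ} (hu : HarmonicOnNhd u (closedBall 0 R))
    (hfu : {z ∈ closedBall 0 R | log ‖f z‖ ≠ discPotential D R z + u z}.Finite)
    (hr : 0 < r) (hd : 0 < d) (hc : r + ‖c‖ ≤ R - d) (hh : r + ‖h‖ ≤ R - d) :
    proximity (fun z ↦ f (z + c) / f (z + h)) ⊤ r ≤
      circleAverage (fun z ↦ |discPotential D R (z + c) - discPotential D R (z + h)|) 0 r +
        2 * R * ‖c - h‖ / d ^ 2 * circleAverage (fun z ↦ |u z|) 0 R := by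
  set M := 2 * R * ‖c - h‖ / d ^ 2 * circleAverage (fun z ↦ |u z|) 0 R
  have hint : CircleIntegrable
      (fun z ↦ |discPotential D R (z + c) - discPotential D R (z + h)|) 0 r :=
    ((circleIntegrable_discPotential_add D R c 0 r).sub
      (circleIntegrable_discPotential_add D R h 0 r)).abs
  have hnorm {z b : ℂ} (hz : ‖z‖ = r) (hb : r + ‖b‖ ≤ R - d) : ‖z + b‖ ≤ R - d := by
    linarith [norm_add_le z b]
  have hu_diff {z : ℂ} (hz : ‖z‖ = r) : |u (z + c) - u (z + h)| ≤ M := by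
    have := abs_sub_le_mul_circleAverage_abs_of_harmonic hd hu
      (by rw [sub_zero]; exact hnorm hz hc) (by rw [sub_zero]; exact hnorm hz hh)
    rwa [add_sub_add_left_eq_sub] at this
  have hexc (b : ℂ) :
      ((· + b) ⁻¹' {z ∈ closedBall 0 R | log ‖f z‖ ≠ discPotential D R z + u z}).Finite :=
    hfu.preimage (add_left_injective b).injOn
  rw [proximity_top, ← circleAverage_const M 0 r,
    ← circleAverage_fun_add hint (circleIntegrable_const _ _ _)]
  refine circleAverage_mono_of_finite hr.ne'
    (circleIntegrable_posLog_norm fun z _ ↦ meromorphic_shift_div hf c h z)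
    (hint.add (circleIntegrable_const _ _ _)) ((hexc c).union (hexc h)) fun z ⟨hz, hzB⟩ ↦ ?_
  rw [abs_of_pos hr, mem_sphere_zero_iff_norm] at hz
  rw [Set.mem_union, not_or] at hzB
  have hlog {b : ℂ} (hb : r + ‖b‖ ≤ R - d)
      (hzb : z + b ∉ {z ∈ closedBall 0 R | log ‖f z‖ ≠ discPotential D R z + u z}) :
      log ‖f (z + b)‖ = discPotential D R (z + b) + u (z + b) := by
    by_contra hne
    exact hzb ⟨mem_closedBall_zero_iff.2 (by linarith [hnorm hz hb]), hne⟩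
  exact (posLog_norm_div_le_of_log_norm_eq_add (hlog hc hzB.1) (hlog hh hzB.2)).trans
    (by gcongr; exact hu_diff hz)

theorem proximity_shift_div_le_discCount (hf : Meromorphic f)
    (hord : ∀ z, meromorphicOrderAt f z ≠ ⊤) (hα₀ : 0 < α) (hα : α < 1) (hr : 0 < r)
    (hR : 1 ≤ R) (hd : 0 < d) (hc : r + ‖c‖ ≤ R - d) (hh : r + ‖h‖ ≤ R - d) :
    proximity (fun z ↦ f (z + c) / f (z + h)) ⊤ r ≤
      discCount |divisor f Set.univ| R *
          (2 * (‖c - h‖ ^ α / α) * absSinRpowNegMean α * r ^ (-α)) +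
        2 * R * ‖c - h‖ / d ^ 2 * (proximity f ⊤ R + proximity f⁻¹ ⊤ R +
          discCount |divisor f Set.univ| R * (2 * log (2 * R))) := by
  obtain ⟨u, hu, hfu⟩ := exists_harmonicOnNhd_log_norm_eq_discPotential_add hf hord R
  refine (proximity_shift_div_le_of_log_norm_eq_discPotential_add hf hu hfu hr hd hc hh).trans ?_
  gcongr
  · exact circleAverage_abs_discPotential_shift_sub_le _ R hα₀ hα c h hr
  · exact circleAverage_abs_le_of_log_norm_eq_discPotential_add hf hR hu hfu

end LogPotential

section ShiftQuotient

open Function Function.locallyFinsuppWithin MeromorphicOn Real ValueDistribution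

variable {f : ℂ → ℂ} {c h : ℂ} {r R R' d x α β : ℝ}

theorem discCount_abs_divisor_mul_log_le (f : ℂ → ℂ) (hR : 1 ≤ R) (hRR' : R ≤ R') :
    discCount |divisor f Set.univ| R * log (R' / R) ≤
      logCounting f ⊤ R' + logCounting f⁻¹ ⊤ R' := by
  refine (discCount_mul_log_le_logCounting (abs_nonneg _) hR hRR').trans_eq ?_
  rw [← posPart_add_negPart, map_add, Pi.add_apply, logCounting_inv, logCounting_top,
    logCounting_zero, add_comm]

theorem proximity_le_characteristic_of_le (hf : Meromorphic f) (hR : 1 ≤ R) (hRR' : R ≤ R') :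
    proximity f ⊤ R ≤ characteristic f ⊤ R' := by
  calc proximity f ⊤ R ≤ characteristic f ⊤ R :=
        le_add_of_nonneg_right (logCounting_nonneg hR)
    _ ≤ characteristic f ⊤ R' := characteristic_monotoneOn hf (zero_lt_one.trans_le hR)
        (zero_lt_one.trans_le (hR.trans hRR')) hRR'

theorem proximity_shift_div_le_characteristic (hf : Meromorphic f)
    (hord : ∀ z, meromorphicOrderAt f z ≠ ⊤) (hα₀ : 0 < α) (hα : α < 1) (hr : 0 < r)
    (hR : 1 ≤ R) (hRR' : R < R') (hd : 0 < d) (hc : r + ‖c‖ ≤ R - d) (hh : r + ‖h‖ ≤ R - d) :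
    proximity (fun z ↦ f (z + c) / f (z + h)) ⊤ r ≤
      (2 * (‖c - h‖ ^ α / α) * absSinRpowNegMean α * r ^ (-α) / log (R' / R) +
          2 * R * ‖c - h‖ / d ^ 2 * (1 + 2 * log (2 * R) / log (R' / R))) *
        (characteristic f ⊤ R' + characteristic f⁻¹ ⊤ R') := by
  set K := 2 * (‖c - h‖ ^ α / α) * absSinRpowNegMean α * r ^ (-α)
  set T := characteristic f ⊤ R' + characteristic f⁻¹ ⊤ R'
  have hK₀ : 0 ≤ K := by
    have := absSinRpowNegMean_nonneg α
    positivity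
  have hlog2R : 0 ≤ log (2 * R) := log_nonneg (by linarith)
  have hprox : proximity f ⊤ R + proximity f⁻¹ ⊤ R ≤ T :=
    add_le_add (proximity_le_characteristic_of_le hf hR hRR'.le)
      (proximity_le_characteristic_of_le hf.inv hR hRR'.le)
  have hcount : discCount |divisor f Set.univ| R ≤ T / log (R' / R) := by
    rw [le_div_iff₀ (log_pos ((one_lt_div (by linarith)).2 hRR'))]
    refine (discCount_abs_divisor_mul_log_le f hR hRR'.le).trans ?_
    exact add_le_add (le_add_of_nonneg_left (proximity_nonneg _))
      (le_add_of_nonneg_left (proximity_nonneg _))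
  refine (proximity_shift_div_le_discCount hf hord hα₀ hα hr hR hd hc hh).trans ?_
  calc _ ≤ T / log (R' / R) * K + 2 * R * ‖c - h‖ / d ^ 2 *
        (T + T / log (R' / R) * (2 * log (2 * R))) := by gcongr
    _ = _ := by ring

theorem div_le_log_add_div_add_two_thirds (hx : 0 < x) (hxr : x ≤ r) :
    x / (6 * r) ≤ log ((r + x) / (r + 2 / 3 * x)) := by
  have hr : 0 < r := hx.trans_le hxr
  calc x / (6 * r) ≤ x / (3 * (r + x)) := div_le_div_of_nonneg_left hx.le (by positivity)
        (by linarith)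
    _ = 1 - ((r + x) / (r + 2 / 3 * x))⁻¹ := by
        field_simp
        ring
    _ ≤ log ((r + x) / (r + 2 / 3 * x)) := one_sub_inv_le_log_of_pos (by positivity)

theorem proximity_shift_div_le_of_step (hf : Meromorphic f)
    (hord : ∀ z, meromorphicOrderAt f z ≠ ⊤) (hα₀ : 0 < α) (hα : α < 1) (hr : 4 ≤ r)
    (hx : 0 < x) (hxr : x ≤ r) (hc : ‖c‖ ≤ x / 3) (hh : ‖h‖ ≤ x / 3) :
    proximity (fun z ↦ f (z + c) / f (z + h)) ⊤ r ≤
      (12 * (‖c - h‖ ^ α / α) * absSinRpowNegMean α * (r ^ (-α) * (r / x)) +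
          900 * ‖c - h‖ * (r ^ 2 / x ^ 3 * log r)) *
        (characteristic f ⊤ (r + x) + characteristic f⁻¹ ⊤ (r + x)) := by
  have hmean := absSinRpowNegMean_nonneg α
  have hgap := div_le_log_add_div_add_two_thirds hx hxr
  have hlogr : 1 ≤ log r := by
    rw [le_log_iff_exp_le (by linarith)]
    linarith [exp_one_lt_three]
  have hlog2R : log (2 * (r + 2 / 3 * x)) ≤ 2 * log r := by
    rw [← log_rpow (by linarith), rpow_two]
    exact log_le_log (by linarith) (by nlinarith)
  have hgap_inv (a : ℝ) (ha : 0 ≤ a) :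
      a / log ((r + x) / (r + 2 / 3 * x)) ≤ 6 * a * (r / x) := by
    calc _ ≤ a / (x / (6 * r)) := by gcongr
      _ = 6 * a * (r / x) := by field_simp
  have hone : 1 ≤ log r * (r / x) :=
    one_le_mul_of_one_le_of_one_le hlogr ((one_le_div hx).2 hxr)
  refine (proximity_shift_div_le_characteristic (R := r + 2 / 3 * x) (R' := r + x) (d := x / 3)
    hf hord hα₀ hα (by linarith) (by linarith) (by linarith) (by linarith) (by linarith)
    (by linarith)).trans ?_
  have hT : 0 ≤ characteristic f ⊤ (r + x) + characteristic f⁻¹ ⊤ (r + x) :=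
    add_nonneg (characteristic_nonneg (by linarith)) (characteristic_nonneg (by linarith))
  refine mul_le_mul_of_nonneg_right (add_le_add ?_ ?_) hT
  · exact (hgap_inv _ (by positivity)).trans_eq (by ring)
  calc 2 * (r + 2 / 3 * x) * ‖c - h‖ / (x / 3) ^ 2 *
        (1 + 2 * log (2 * (r + 2 / 3 * x)) / log ((r + x) / (r + 2 / 3 * x)))
      ≤ 2 * (r + r) * ‖c - h‖ / (x / 3) ^ 2 *
          (log r * (r / x) + 6 * (2 * (2 * log r)) * (r / x)) := by
        have hlog₀ : 0 ≤ log (2 * (r + 2 / 3 * x)) := log_nonneg (by linarith)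
        have hgap₀ : 0 ≤ log ((r + x) / (r + 2 / 3 * x)) := hgap.trans' (by positivity)
        gcongr
        · linarith
        · exact (hgap_inv _ (by positivity)).trans (by gcongr)
    _ = 900 * ‖c - h‖ * (r ^ 2 / x ^ 3 * log r) := by
        field_simp
        ring

theorem exists_characteristic_inv_le (hf : Meromorphic f) :
    ∃ C, 0 ≤ C ∧ ∀ r, characteristic f⁻¹ ⊤ r ≤ characteristic f ⊤ r + C := by
  refine ⟨max |log ‖f 0‖| |log ‖meromorphicTrailingCoeffAt f 0‖|, by positivity, fun r ↦ ?_⟩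
  have := characteristic_sub_characteristic_inv_le (R := r) hf
  linarith [(abs_le.1 this).1]

theorem rpow_neg_mul_div_rpow_le (hr : 1 ≤ r) (hβ : β ≤ 1) (hlog : 1 ≤ log r) :
    r ^ (-β) * (r / r ^ β) ≤ r ^ (2 - 3 * β) * log r := by
  have hr₀ : 0 < r := by linarith
  calc r ^ (-β) * (r / r ^ β) = r ^ (1 - 2 * β) := by
        rw [show 1 - 2 * β = -β + (1 - β) by ring, rpow_add hr₀, rpow_sub hr₀, rpow_one]
    _ ≤ r ^ (2 - 3 * β) := rpow_le_rpow_of_exponent_le hr (by linarith)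
    _ ≤ r ^ (2 - 3 * β) * log r := le_mul_of_one_le_right (by positivity) hlog

theorem exists_eventually_proximity_shift_div_le (hf : Meromorphic f)
    (hord : ∀ z, meromorphicOrderAt f z ≠ ⊤) (c h : ℂ) (hβ₀ : 0 < β) (hβ : β < 1) :
    ∃ C, ∀ᶠ r in atTop, proximity (fun z ↦ f (z + c) / f (z + h)) ⊤ r ≤
      C * (r ^ (2 - 3 * β) * log r) * (characteristic f ⊤ (r + r ^ β) + 1) := by
  obtain ⟨C, hC₀, hC⟩ := exists_characteristic_inv_le hf
  set K := 12 * (‖c - h‖ ^ β / β) * absSinRpowNegMean β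
  have hK : 0 ≤ K := by
    have := absSinRpowNegMean_nonneg β
    positivity
  refine ⟨(K + 900 * ‖c - h‖) * (2 + C), ?_⟩
  have hlarge : ∀ᶠ r : ℝ in atTop, max ‖c‖ ‖h‖ * 3 ≤ r ^ β :=
    (tendsto_rpow_atTop hβ₀).eventually_ge_atTop _
  filter_upwards [eventually_ge_atTop 4, tendsto_log_atTop.eventually_ge_atTop 1, hlarge]
    with r hr hlog hshift
  have hr₀ : 0 < r := by linarith
  have hβr : r ^ β ≤ r := rpow_le_self_of_one_le (by linarith) hβ.le
  have hmax := le_max_left ‖c‖ ‖h‖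
  have hmax' := le_max_right ‖c‖ ‖h‖
  have hr₁ : 1 ≤ r + r ^ β := by linarith [rpow_nonneg hr₀.le β]
  have hT : 0 ≤ characteristic f ⊤ (r + r ^ β) := characteristic_nonneg hr₁
  have hkernel := rpow_neg_mul_div_rpow_le (by linarith) hβ.le hlog
  have hharm : r ^ 2 / (r ^ β) ^ 3 = r ^ (2 - 3 * β) := by
    rw [← rpow_natCast, ← rpow_natCast, ← rpow_mul hr₀.le, ← rpow_sub hr₀]
    push_cast
    ring_nf
  calc _ ≤ (K * (r ^ (-β) * (r / r ^ β)) +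
          900 * ‖c - h‖ * (r ^ 2 / (r ^ β) ^ 3 * log r)) *
        (characteristic f ⊤ (r + r ^ β) + characteristic f⁻¹ ⊤ (r + r ^ β)) :=
        proximity_shift_div_le_of_step hf hord hβ₀ hβ hr (by positivity) hβr
          (by linarith) (by linarith)
    _ ≤ (K * (r ^ (2 - 3 * β) * log r) + 900 * ‖c - h‖ * (r ^ (2 - 3 * β) * log r)) *
        ((2 + C) * (characteristic f ⊤ (r + r ^ β) + 1)) := by
        rw [hharm]
        have hsum : 0 ≤ characteristic f ⊤ (r + r ^ β) + characteristic f⁻¹ ⊤ (r + r ^ β) :=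
          add_nonneg hT (characteristic_nonneg hr₁)
        gcongr
        nlinarith [hC (r + r ^ β)]
    _ = _ := by ring

end ShiftQuotient

section GrowthLemma

open Real

variable {T : ℝ → ℝ} {r₀ β ρ q ε : ℝ}

theorem lintegral_inv_le_of_ratio_le {F : Set ℝ} (hF : F ⊆ Set.Ioi 0) (hε : 0 ≤ ε)
    (hratio : ∀ x ∈ F, ∀ y ∈ F, y ≤ (1 + ε) * x) :
    ∫⁻ r in F, ENNReal.ofReal r⁻¹ ≤ ENNReal.ofReal ε := by
  rcases F.eq_empty_or_nonempty with rfl | hne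
  · simp
  set a := sInf F
  have hle {y : ℝ} (hy : y ∈ F) : y ≤ (1 + ε) * a := by
    rw [← div_le_iff₀' (by positivity)]
    exact le_csInf hne fun x hx ↦ (div_le_iff₀' (by positivity)).2 (hratio x hx y hy)
  have ha : 0 < a := by
    obtain ⟨y, hy⟩ := hne
    exact pos_of_mul_pos_right ((hF hy).trans_le (hle hy)) (by positivity)
  have hsub : F ⊆ Set.Icc a ((1 + ε) * a) := fun y hy ↦
    ⟨csInf_le ⟨0, fun x hx ↦ (hF hx).le⟩ hy, hle hy⟩
  calc ∫⁻ r in F, ENNReal.ofReal r⁻¹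
      ≤ ∫⁻ r in Set.Icc a ((1 + ε) * a), ENNReal.ofReal r⁻¹ := lintegral_mono_set hsub
    _ ≤ ∫⁻ _ in Set.Icc a ((1 + ε) * a), ENNReal.ofReal a⁻¹ :=
        setLIntegral_mono' measurableSet_Icc fun r hr ↦ by gcongr; exact hr.1
    _ = ENNReal.ofReal ε := by
        rw [setLIntegral_const, volume_Icc, ← ENNReal.ofReal_mul (by positivity)]
        congr 1
        field_simp
        ring

theorem le_one_add_rpow_mul_of_growth (hT : MonotoneOn T (Set.Ici r₀)) (hr₀ : 1 ≤ r₀) (hρ : 0 < ρ)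
    (hβ : β < 1) (hTρ : ∀ r, r₀ ≤ r → T r ≤ r ^ ρ) {x y t : ℝ} (ht : 0 < t) (hx : r₀ ≤ x)
    (hy : r₀ ≤ y) (htx : t ≤ T x) (hyx : T y < T (x + x ^ β)) :
    y ≤ (1 + t ^ ((β - 1) / ρ)) * x := by
  have hx₀ : 0 < x := by linarith
  have hyx' : y < x + x ^ β := hT.reflect_lt hy
    (show r₀ ≤ x + x ^ β by linarith [rpow_pos_of_pos hx₀ β]) hyx
  have hgap : x ^ (β - 1) ≤ t ^ ((β - 1) / ρ) := by
    calc x ^ (β - 1) = (x ^ ρ) ^ ((β - 1) / ρ) := by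
          rw [← rpow_mul hx₀.le, mul_div_cancel₀ _ hρ.ne']
      _ ≤ t ^ ((β - 1) / ρ) := rpow_le_rpow_of_nonpos ht (htx.trans (hTρ x hx))
          (div_nonpos_of_nonpos_of_nonneg (by linarith) hρ.le)
  calc y ≤ (1 + x ^ (β - 1)) * x := by
        rw [add_mul, ← rpow_add_one hx₀.ne']
        simpa using hyx'.le
    _ ≤ _ := by gcongr

theorem lintegral_inv_growth_level_le (hT : MonotoneOn T (Set.Ici r₀)) (hr₀ : 1 ≤ r₀) (hρ : 0 < ρ)
    (hTρ : ∀ r, r₀ ≤ r → T r ≤ r ^ ρ) (hβ : β < 1) (hq : 0 < q) {t : ℝ} (ht : 0 < t) :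
    ∫⁻ r in {r | (r₀ ≤ r ∧ q * T r < T (r + r ^ β)) ∧ t ≤ T r ∧ T r < q * t},
      ENNReal.ofReal r⁻¹ ≤ ENNReal.ofReal (t ^ ((β - 1) / ρ)) := by
  refine lintegral_inv_le_of_ratio_le (fun r hr ↦ (zero_lt_one.trans_le hr₀).trans_le hr.1.1)
    (by positivity) fun x ⟨⟨hx, hgrow⟩, htx, _⟩ y ⟨⟨hy, _⟩, _, hyt⟩ ↦ ?_
  refine le_one_add_rpow_mul_of_growth hT hr₀ hρ hβ hTρ ht hx hy htx ?_
  calc T y < q * t := hyt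
    _ ≤ q * T x := by gcongr
    _ < T (x + x ^ β) := hgrow

theorem finLogMeasure_setOf_mul_lt_add_rpow (hT : MonotoneOn T (Set.Ici r₀)) (hr₀ : 1 ≤ r₀)
    (hT₀ : 0 < T r₀) (hρ : 0 < ρ) (hTρ : ∀ r, r₀ ≤ r → T r ≤ r ^ ρ) (hβ : β < 1) (hq : 1 < q) :
    FinLogMeasure {r | r₀ ≤ r ∧ q * T r < T (r + r ^ β)} := by
  set γ := (β - 1) / ρ
  have hγ : γ < 0 := div_neg_of_neg_of_pos (by linarith) hρ
  set t : ℕ → ℝ := fun n ↦ T r₀ * q ^ n with ht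
  have hcover : {r | r₀ ≤ r ∧ q * T r < T (r + r ^ β)} ⊆
      ⋃ n, {r | (r₀ ≤ r ∧ q * T r < T (r + r ^ β)) ∧ t n ≤ T r ∧ T r < q * t n} := by
    intro r hr
    obtain ⟨n, hn, hn'⟩ :=
      exists_nat_pow_near ((one_le_div hT₀).2 (hT Set.self_mem_Ici hr.1 hr.1)) hq
    rw [le_div_iff₀' hT₀] at hn
    rw [div_lt_iff₀' hT₀, pow_succ', mul_left_comm] at hn'
    exact Set.mem_iUnion.2 ⟨n, hr, hn, hn'⟩
  have hsum : Summable fun n ↦ t n ^ γ := by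
    have hgeom (n : ℕ) : t n ^ γ = T r₀ ^ γ * (q ^ γ) ^ n := by
      rw [ht, mul_rpow hT₀.le (by positivity), ← rpow_pow_comm (by positivity)]
    simpa only [hgeom] using (summable_geometric_of_lt_one (by positivity)
      (rpow_lt_one_of_one_lt_of_neg hq hγ)).mul_left _
  refine ⟨fun r hr ↦ (zero_lt_one.trans_le hr₀).trans_le hr.1, ?_⟩
  calc ∫⁻ r in {r | r₀ ≤ r ∧ q * T r < T (r + r ^ β)}, ENNReal.ofReal r⁻¹
      ≤ ∑' n, ∫⁻ r in {r | (r₀ ≤ r ∧ q * T r < T (r + r ^ β)) ∧ t n ≤ T r ∧ T r < q * t n},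
          ENNReal.ofReal r⁻¹ := (lintegral_mono_set hcover).trans (lintegral_iUnion_le _ _)
    _ ≤ ∑' n, ENNReal.ofReal (t n ^ γ) := ENNReal.tsum_le_tsum fun n ↦
        lintegral_inv_growth_level_le hT hr₀ hρ hTρ hβ (by linarith) (by positivity)
    _ = ENNReal.ofReal (∑' n, t n ^ γ) :=
        (ENNReal.ofReal_tsum_of_nonneg (fun n ↦ by positivity) hsum).symm
    _ < ⊤ := ENNReal.ofReal_lt_top

end GrowthLemma

section ExceptionalSet

open Real ValueDistribution

variable {f : ℂ → ℂ} {r r₀ ρ β δ s : ℝ}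

theorem meromorphicOrderAt_ne_top_of_characteristic_pos (hf : Meromorphic f) (hr : 0 < r)
    (hT : 0 < characteristic f ⊤ r) (z : ℂ) : meromorphicOrderAt f z ≠ ⊤ := by
  intro hz
  have htop (w : ℂ) : meromorphicOrderAt f w = ⊤ := by
    by_contra hw
    exact (hf.meromorphicOn (s := Set.univ)).meromorphicOrderAt_ne_top_of_isPreconnected
      isPreconnected_univ (Set.mem_univ w) (Set.mem_univ z) hw hz
  have hzero : f =ᶠ[codiscrete ℂ] fun _ ↦ 0 := by
    rw [EventuallyEq, Filter.Eventually, mem_codiscrete]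
    intro w
    rw [disjoint_principal_right, compl_compl]
    exact meromorphicOrderAt_eq_top_iff.1 (htop w)
  rw [characteristic_congr_codiscrete hzero hr.ne'] at hT
  simp [characteristic] at hT

theorem exists_finLogMeasure_eventually_characteristic_add_rpow_le (hf : Meromorphic f)
    (hr₀ : 0 < r₀) (hT₀ : 0 < characteristic f ⊤ r₀) (hρ : 0 < ρ)
    (hTρ : ∀ᶠ r in atTop, characteristic f ⊤ r ≤ r ^ ρ) (hβ : β < 1) :
    ∃ E, FinLogMeasure E ∧ ∀ᶠ r in atTop ⊓ 𝓟 Eᶜ,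
      characteristic f ⊤ (r + r ^ β) ≤ 2 * characteristic f ⊤ r := by
  obtain ⟨r₁, hr₁⟩ := eventually_atTop.1 hTρ
  set r₂ := max (max r₀ r₁) 1
  have hr₀₂ : r₀ ≤ r₂ := (le_max_left _ _).trans (le_max_left _ _)
  have hr₁₂ : r₁ ≤ r₂ := (le_max_right _ _).trans (le_max_left _ _)
  have hmono : MonotoneOn (characteristic f ⊤) (Set.Ioi 0) := characteristic_monotoneOn hf
  refine ⟨_, finLogMeasure_setOf_mul_lt_add_rpow (q := 2)
    (hmono.mono (Set.Ici_subset_Ioi.2 (hr₀.trans_le hr₀₂))) (le_max_right _ _)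
    (hT₀.trans_le (hmono hr₀ (hr₀.trans_le hr₀₂) hr₀₂)) hρ (fun r hr ↦ hr₁ r (hr₁₂.trans hr))
    hβ one_lt_two, ?_⟩
  filter_upwards [mem_inf_of_left (Ici_mem_atTop r₂), mem_inf_of_right (mem_principal_self _)]
    with r hr hrE
  exact not_lt.1 fun hlt ↦ hrE ⟨hr, hlt⟩

theorem exists_finLogMeasure_eventually_proximity_shift_div_le (hf : Meromorphic f)
    (hr₀ : 0 < r₀) (hT₀ : 0 < characteristic f ⊤ r₀) (hρ : 0 < ρ)
    (hTρ : ∀ᶠ r in atTop, characteristic f ⊤ r ≤ r ^ ρ) (c h : ℂ) (hβ₀ : 0 < β) (hβ : β < 1) :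
    ∃ E, FinLogMeasure E ∧ ∃ C ≥ 0, ∀ᶠ r in atTop ⊓ 𝓟 Eᶜ,
      proximity (fun z ↦ f (z + c) / f (z + h)) ⊤ r ≤
        C * (r ^ (2 - 3 * β) * log r) * characteristic f ⊤ r := by
  obtain ⟨E, hE, hgrowth⟩ :=
    exists_finLogMeasure_eventually_characteristic_add_rpow_le hf hr₀ hT₀ hρ hTρ hβ
  obtain ⟨C, hC⟩ := exists_eventually_proximity_shift_div_le hf
    (meromorphicOrderAt_ne_top_of_characteristic_pos hf hr₀ hT₀) c h hβ₀ hβ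
  refine ⟨E, hE, |C| * (2 + (characteristic f ⊤ r₀)⁻¹), by positivity, ?_⟩
  filter_upwards [hgrowth, hC.filter_mono inf_le_left, mem_inf_of_left (Ici_mem_atTop 1),
    mem_inf_of_left (Ici_mem_atTop r₀)] with r hgrow hprox (hr : 1 ≤ r) (hr₀r : r₀ ≤ r)
  have hlog : 0 ≤ log r := log_nonneg hr
  have hT₁ : 0 ≤ characteristic f ⊤ (r + r ^ β) :=
    characteristic_nonneg (by linarith [rpow_nonneg (zero_le_one.trans hr) β])
  have hone : 1 ≤ (characteristic f ⊤ r₀)⁻¹ * characteristic f ⊤ r := by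
    rw [← inv_mul_cancel₀ hT₀.ne']
    gcongr
    exact characteristic_monotoneOn hf hr₀ (hr₀.trans_le hr₀r) hr₀r
  calc _ ≤ C * (r ^ (2 - 3 * β) * log r) * (characteristic f ⊤ (r + r ^ β) + 1) := hprox
    _ ≤ |C| * (r ^ (2 - 3 * β) * log r) * (2 * characteristic f ⊤ r +
        (characteristic f ⊤ r₀)⁻¹ * characteristic f ⊤ r) := by
      gcongr
      exact le_abs_self C
    _ = _ := by ring

theorem exists_finLogMeasure_tendsto_proximity_shift_div (hf : Meromorphic f) (hr₀ : 0 < r₀)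
    (hT₀ : 0 < characteristic f ⊤ r₀) (hρ : 0 < ρ)
    (hTρ : ∀ᶠ r in atTop, characteristic f ⊤ r ≤ r ^ ρ) (c h : ℂ) (hs : 0 ≤ s) (hδ : δ < 1) :
    ∃ E, FinLogMeasure E ∧
      Tendsto (fun r ↦ proximity (fun z ↦ f (z + c) / f (z + h)) ⊤ r /
        (characteristic f ⊤ (r + s) / r ^ δ)) (atTop ⊓ 𝓟 Eᶜ) (𝓝 0) := by
  obtain ⟨β, hβ, hβ₁⟩ := exists_between (max_lt one_pos (show (2 + δ) / 3 < 1 by linarith))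
  obtain ⟨hβ₀, hβδ⟩ := max_lt_iff.1 hβ
  obtain ⟨E, hE, C, hC₀, hC⟩ :=
    exists_finLogMeasure_eventually_proximity_shift_div_le hf hr₀ hT₀ hρ hTρ c h hβ₀ hβ₁
  have hlim : Tendsto (fun r ↦ C * (log r / r ^ (3 * β - 2 - δ))) atTop (𝓝 0) := by
    simpa using (isLittleO_log_rpow_atTop (by linarith)).tendsto_div_nhds_zero.const_mul C
  refine ⟨E, hE, squeeze_zero' ?_ ?_ (hlim.mono_left inf_le_left)⟩
  · filter_upwards [mem_inf_of_left (Ici_mem_atTop 1)] with r (hr : 1 ≤ r)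
    exact div_nonneg (proximity_nonneg _)
      (div_nonneg (characteristic_nonneg (by linarith)) (by positivity))
  filter_upwards [hC, mem_inf_of_left (Ici_mem_atTop 1), mem_inf_of_left (Ici_mem_atTop r₀)]
    with r hprox (hr : 1 ≤ r) (hr₀r : r₀ ≤ r)
  have hr' : 0 < r := by linarith
  have hrs : 0 < r + s := by linarith
  have hmono : MonotoneOn (characteristic f ⊤) (Set.Ioi 0) := characteristic_monotoneOn hf
  have hT : 0 < characteristic f ⊤ (r + s) := hT₀.trans_le (hmono hr₀ hrs (by linarith))
  have hpow : r ^ (2 - 3 * β) = (r ^ (3 * β - 2 - δ) * r ^ δ)⁻¹ := by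
    rw [← rpow_add hr', ← rpow_neg hr'.le]
    ring_nf
  rw [div_le_iff₀ (by positivity)]
  calc _ ≤ C * (r ^ (2 - 3 * β) * log r) * characteristic f ⊤ r := hprox
    _ ≤ C * (r ^ (2 - 3 * β) * log r) * characteristic f ⊤ (r + s) := by
      have := log_nonneg hr
      gcongr
      exact hmono hr' hrs (by linarith)
    _ = _ := by
      rw [hpow]
      ring

end ExceptionalSet

section FiniteOrder

open Real ValueDistribution

variable {f : ℂ → ℂ}

theorem FiniteOrder.exists_eventually_characteristic_le_rpow (hord : FiniteOrder f)
    (hf : Meromorphic f) : ∃ ρ : ℝ, 0 < ρ ∧ ∀ᶠ r in atTop, characteristic f ⊤ r ≤ r ^ ρ := by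
  obtain ⟨b, hb⟩ := hord
  rw [eventually_map] at hb
  refine ⟨max b 1, by positivity, ?_⟩
  filter_upwards [hb, eventually_gt_atTop 1] with r hbr hr
  have hlog := log_pos hr
  rw [nevT_eq_characteristic hf (by linarith), div_le_iff₀ hlog] at hbr
  refine le_rpow_of_log_le (by linarith) (hbr.trans ?_)
  gcongr
  exact le_max_left b 1

end FiniteOrder

/-- For a non-constant finite-order meromorphic function `f`, `c, h ∈ ℂ` and `δ < 1`,
`m(r, f(z+c)/f(z+h)) = o(T(r+|c−h|+|h|, f) / r^δ)` as `r → ∞` outside a possible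
exceptional set of finite logarithmic measure. -/
theorem log_difference_lemma_two_shifts (f : ℂ → ℂ) (hf : MeromorphicOn f Set.univ)
    (hnc : Nonconstant f) (hord : FiniteOrder f) (c h : ℂ) (δ : ℝ) (hδ : δ < 1) :
    ∃ E : Set ℝ, FinLogMeasure E ∧
      Tendsto (fun r : ℝ => nevm (fun z => f (z + c) / f (z + h)) r /
          (nevT f (r + ‖c - h‖ + ‖h‖) / r ^ δ))
        (atTop ⊓ 𝓟 Eᶜ) (𝓝 0) := by
  have hm : Meromorphic f := fun z ↦ hf z (Set.mem_univ z)
  have hs : 0 ≤ ‖c - h‖ + ‖h‖ := by positivity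
  have hquot {r : ℝ} (hr : 1 ≤ r) : nevm (fun z ↦ f (z + c) / f (z + h)) r /
        (nevT f (r + ‖c - h‖ + ‖h‖) / r ^ δ) =
      ValueDistribution.proximity (fun z ↦ f (z + c) / f (z + h)) ⊤ r /
        (ValueDistribution.characteristic f ⊤ (r + (‖c - h‖ + ‖h‖)) / r ^ δ) := by
    rw [nevm_eq_proximity, add_assoc, nevT_eq_characteristic hm (by linarith)]
  by_cases hpos : ∃ r₀ > 0, 0 < ValueDistribution.characteristic f ⊤ r₀
  · obtain ⟨r₀, hr₀, hT₀⟩ := hpos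
    obtain ⟨ρ, hρ, hTρ⟩ := hord.exists_eventually_characteristic_le_rpow hm
    obtain ⟨E, hE, hlim⟩ :=
      exists_finLogMeasure_tendsto_proximity_shift_div hm hr₀ hT₀ hρ hTρ c h hs hδ
    refine ⟨E, hE, hlim.congr' ?_⟩
    filter_upwards [mem_inf_of_left (Ici_mem_atTop 1)] with r hr using (hquot hr).symm
  -- A function differing from a constant of modulus at most `1` only on a discrete set has `T = 0`,
  -- and the quotient is then `0` by the convention `x / 0 = 0`.
  · push Not at hpos
    refine ⟨∅, ⟨Set.empty_subset _, by simp⟩, tendsto_const_nhds.congr' ?_⟩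
    filter_upwards [mem_inf_of_left (Ici_mem_atTop 1)] with r hr
    rw [hquot hr, (hpos _ (by linarith [Set.mem_Ici.1 hr])).antisymm
      (ValueDistribution.characteristic_nonneg (by linarith [Set.mem_Ici.1 hr])), zero_div,
      div_zero]
end

section
/- Let a, c ∈ ℂ and let s, r > 0 satisfy |a| < s and r + |c| < s. Then (1/2π) ∫₀^{2π} log⁺ | 1 + ā c / ( s² − ā (re^{iθ} + c) ) | dθ ≤ |c| / ( s − r − |c| ), and (1/2π) ∫₀^{2π} log⁺ | 1 − ā c / ( s² − ā re^{iθ} ) | dθ ≤ |c| / ( s − r ). -/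
open MeasureTheory Filter Topology Metric

/-!
For `‖a‖ ≤ s` and `‖w‖ < s` the triangle inequality gives `‖s² - ā w‖ ≥ s (s - ‖w‖)`; combined with
`log⁺ ‖1 + u‖ ≤ ‖u‖`, this bounds `log⁺ ‖1 ± ā c / (s² - ā w)‖` by `‖c‖ / (s - ‖w‖)`. Translating
the variable turns the first integral into an average over the circle around `c`, on which
`‖w‖ ≤ r + ‖c‖`; the second one is an average over the circle around `0`, on which `‖w‖ = r`.
-/

section

open Real

theorem posLog_norm_one_add_le {A : Type*} [SeminormedAddCommGroup A] [One A] [NormOneClass A]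
    (u : A) : log⁺ ‖1 + u‖ ≤ ‖u‖ := by
  have h_norm : ‖1 + u‖ ≤ 1 + ‖u‖ := by simpa using norm_add_le 1 u
  have h_one : 1 ≤ |1 + ‖u‖| := by
    rw [abs_of_nonneg (by positivity)]
    exact le_add_of_nonneg_right (norm_nonneg u)
  calc log⁺ ‖1 + u‖
      ≤ log⁺ (1 + ‖u‖) := posLog_le_posLog (norm_nonneg _) h_norm
    _ = log (1 + ‖u‖) := posLog_eq_log h_one
    _ ≤ 1 + ‖u‖ - 1 := log_le_sub_one_of_pos (by positivity)
    _ = ‖u‖ := add_sub_cancel_left 1 ‖u‖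

theorem norm_div_sub_mul_le {𝕜 : Type*} [NormedDivisionRing 𝕜] {b d w : 𝕜} {s : ℝ}
    (hb : ‖b‖ ≤ s) (hd : s ^ 2 ≤ ‖d‖) (hw : ‖w‖ < s) :
    ‖b / (d - b * w)‖ ≤ (s - ‖w‖)⁻¹ := by
  have hs : 0 < s := (norm_nonneg w).trans_lt hw
  have h_lower : s * (s - ‖w‖) ≤ ‖d - b * w‖ :=
    calc s * (s - ‖w‖)
        = s ^ 2 - s * ‖w‖ := by ring
      _ ≤ ‖d‖ - ‖b‖ * ‖w‖ := by gcongr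
      _ = ‖d‖ - ‖b * w‖ := by rw [norm_mul]
      _ ≤ ‖d - b * w‖ := norm_sub_norm_le d (b * w)
  calc ‖b / (d - b * w)‖
      = ‖b‖ / ‖d - b * w‖ := norm_div _ _
    _ ≤ s / (s * (s - ‖w‖)) := by
        have : 0 < s - ‖w‖ := sub_pos.2 hw
        gcongr
    _ = (s - ‖w‖)⁻¹ := by rw [div_mul_cancel_left₀ hs.ne']

theorem posLog_norm_one_add_mul_div_sub_mul_le {𝕜 : Type*} [NormedDivisionRing 𝕜] {b d w : 𝕜}
    {s : ℝ} (c : 𝕜) (hb : ‖b‖ ≤ s) (hd : s ^ 2 ≤ ‖d‖) (hw : ‖w‖ < s) :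
    log⁺ ‖1 + b * c / (d - b * w)‖ ≤ ‖c‖ / (s - ‖w‖) :=
  calc log⁺ ‖1 + b * c / (d - b * w)‖
      ≤ ‖b * c / (d - b * w)‖ := posLog_norm_one_add_le _
    _ = ‖c‖ * ‖b / (d - b * w)‖ := by simp only [norm_div, norm_mul]; ring
    _ ≤ ‖c‖ * (s - ‖w‖)⁻¹ := by gcongr; exact norm_div_sub_mul_le hb hd hw
    _ = ‖c‖ / (s - ‖w‖) := (div_eq_mul_inv _ _).symm

theorem circleAverage_posLog_norm_one_add_mul_div_sub_mul_le {b d z₀ : ℂ} {s R : ℝ} (c : ℂ)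
    (hb : ‖b‖ ≤ s) (hd : s ^ 2 ≤ ‖d‖) (hR : |R| + ‖z₀‖ < s) :
    circleAverage (fun z ↦ log⁺ ‖1 + b * c / (d - b * z)‖) z₀ R ≤ ‖c‖ / (s - |R| - ‖z₀‖) := by
  have h_integrable : CircleIntegrable (fun z ↦ log⁺ ‖1 + b * c / (d - b * z)‖) z₀ R :=
    MeromorphicOn.circleIntegrable_posLog_norm fun z _ ↦ by fun_prop
  refine circleAverage_mono_on_of_le_circle h_integrable fun z hz ↦ ?_
  have hz_norm : ‖z‖ ≤ |R| + ‖z₀‖ := by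
    rw [mem_sphere_iff_norm] at hz
    simpa [hz] using norm_add_le (z - z₀) z₀
  calc log⁺ ‖1 + b * c / (d - b * z)‖
      ≤ ‖c‖ / (s - ‖z‖) := posLog_norm_one_add_mul_div_sub_mul_le c hb hd (hz_norm.trans_lt hR)
    _ ≤ ‖c‖ / (s - |R| - ‖z₀‖) := by
        rw [sub_sub]
        have : 0 < s - (|R| + ‖z₀‖) := sub_pos.2 hR
        gcongr

theorem nevm_eq_circleAverage (f : ℂ → ℂ) (r : ℝ) :
    nevm f r = circleAverage (fun z ↦ log⁺ ‖f z‖) 0 r := by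
  simp [nevm, circleAverage_def, logPlus, circ, circleMap, posLog_apply, max_comm]

theorem nevm_comp_add_const (f : ℂ → ℂ) (c : ℂ) (r : ℝ) :
    nevm (fun z ↦ f (z + c)) r = circleAverage (fun z ↦ log⁺ ‖f z‖) c r := by
  rw [nevm_eq_circleAverage, ← circleAverage_map_add_const (c := c)]

end

/-- Let `a, c ∈ ℂ` and `s, r > 0` with `|a| < s` and `r + |c| < s`. Then
`(1/2π) ∫₀^{2π} log⁺|1 + ā c/(s² − ā(re^{iθ}+c))| dθ ≤ |c|/(s − r − |c|)` and
`(1/2π) ∫₀^{2π} log⁺|1 − ā c/(s² − ā re^{iθ})| dθ ≤ |c|/(s − r)`. -/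
theorem circle_integral_reflected_terms_bound (a c : ℂ) (s r : ℝ)
    (hs : 0 < s) (hr : 0 < r) (ha : ‖a‖ < s) (hrc : r + ‖c‖ < s) :
    ((2 * Real.pi)⁻¹ * ∫ θ in (0:ℝ)..(2 * Real.pi),
        logPlus ‖1 + (starRingEnd ℂ) a * c /
          ((s : ℂ) ^ 2 - (starRingEnd ℂ) a * (circ r θ + c))‖ ≤
      ‖c‖ / (s - r - ‖c‖)) ∧
    ((2 * Real.pi)⁻¹ * ∫ θ in (0:ℝ)..(2 * Real.pi),
        logPlus ‖1 - (starRingEnd ℂ) a * c /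
          ((s : ℂ) ^ 2 - (starRingEnd ℂ) a * circ r θ)‖ ≤
      ‖c‖ / (s - r)) := by
  have hb : ‖(starRingEnd ℂ) a‖ ≤ s := by simpa using ha.le
  have hd : s ^ 2 ≤ ‖(s : ℂ) ^ 2‖ := by simp
  constructor
  · have hr_lt : |r| + ‖c‖ < s := by rwa [abs_of_pos hr]
    calc _ = Real.circleAverage (fun z ↦ Real.posLog ‖1 + (starRingEnd ℂ) a * c /
          ((s : ℂ) ^ 2 - (starRingEnd ℂ) a * z)‖) c r := nevm_comp_add_const _ c r
      _ ≤ ‖c‖ / (s - |r| - ‖c‖) :=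
        circleAverage_posLog_norm_one_add_mul_div_sub_mul_le c hb hd hr_lt
      _ = ‖c‖ / (s - r - ‖c‖) := by rw [abs_of_pos hr]
  · have hr_lt : |r| + ‖(0 : ℂ)‖ < s := by
      simpa [abs_of_pos hr] using lt_of_add_lt_of_nonneg_left hrc (norm_nonneg c)
    calc _ = Real.circleAverage (fun z ↦ Real.posLog ‖1 - (starRingEnd ℂ) a * c /
          ((s : ℂ) ^ 2 - (starRingEnd ℂ) a * z)‖) 0 r := nevm_eq_circleAverage _ r
      _ = Real.circleAverage (fun z ↦ Real.posLog ‖1 + (starRingEnd ℂ) a * -c /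
          ((s : ℂ) ^ 2 - (starRingEnd ℂ) a * z)‖) 0 r := by
        simp only [mul_neg, neg_div, ← sub_eq_add_neg]
      _ ≤ ‖-c‖ / (s - |r| - ‖(0 : ℂ)‖) :=
        circleAverage_posLog_norm_one_add_mul_div_sub_mul_le (-c) hb hd hr_lt
      _ = ‖c‖ / (s - r) := by rw [norm_neg, norm_zero, sub_zero, abs_of_pos hr]
end
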